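/- arXiv:1707.00052 — 2 statements merged into one kernel-verified Lean document; each statement's English description precedes it below -/
import Mathlib

section
/- For all integers q ≥ 2, ℓ ≥ 1 and n ≥ 2ℓ, every code C ⊆ Z_q^n that is single palindromic-deletion correcting for deletions of length ℓ satisfies |C| ≤ Σ_{x ∈ Z_q^n} 1/|S_{π^δ,ℓ}(x)| + Σ_{x' ∈ Z_q^{n−ℓ}} 1/|S_{π^δ,ℓ}(x')| (the generalized sphere packing bound). -/
/-!
Write `D(x)` for the set of results of one palindromic deletion of length `ℓ` on `x`, so that
`|S(x)| = |D(x)| + 1`. The usual argument for such a bound would need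
`∑_{y ∈ S(c)} 1 / |S(y)| ≥ 1` for every codeword `c`, for instance via `|S(y)| ≤ |S(c)|`. This
can fail: for `ℓ = 3`, the word `aabbaabaabb` has the single deletion result `aabbaabb`,
which has two deletion results itself. The proof uses the slack in the first sum instead.

Codewords `c` with `D(c) = ∅` are paid for by their own terms `1 / |S(c)| = 1`. The sets `D(c)` of
the remaining codewords are disjoint, so it is enough that each `y` of length `n - ℓ` can pay
`1 / |D(c)|` whenever `y ∈ D(c)`. The word `y` has at its disposal its own term `1 / |S(y)|` and, if
`D(y) ≠ ∅`, the terms `1 / |S(y z)|` of its `q ^ ℓ` extensions by words `z` of length `ℓ`; these are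
terms of the first sum, they belong to words with `D(y z) ≠ ∅`, and different `y` use different ones
(`charge`, `sum_charge_le`).

If `D(y) = ∅`, the own term is `1`, which is enough. Otherwise two estimates are combined:
* `|D(y)| ≤ |D(c)| + 2ℓ - 2` for `y ∈ D(c)` (`card_dels_le_of_pdel`);
* `|D(y z)| ≤ |D(y)| + ℓ`, and even `|D(y z)| ≤ |D(y)| + ℓ - 1` for all but one `z`
  (`card_dels_append_le`, `card_dels_append_le_of_ne`).

With these, `1 / |D(c)| ≤ 1 / |S(y)| + ∑_z 1 / |S(y z)|` is an elementary inequality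
(`weight_ineq`).
-/

namespace DupPaper

variable {α : Type*}

/-- `y` is obtained from `x` by one tandem duplication of length `ℓ`. -/
def TDup (ℓ : ℕ) (x y : List α) : Prop :=
  ∃ u v w : List α, v.length = ℓ ∧ x = u ++ v ++ w ∧ y = u ++ v ++ v ++ w

/-- `y` is obtained from `x` by one tandem deletion of length `ℓ`. -/
def TDel (ℓ : ℕ) (x y : List α) : Prop :=
  ∃ u v w : List α, v.length = ℓ ∧ x = u ++ v ++ v ++ w ∧ y = u ++ v ++ w

/-- `y` is obtained from `x` by one palindromic duplication of length `ℓ`. -/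
def PDup (ℓ : ℕ) (x y : List α) : Prop :=
  ∃ u v w : List α, v.length = ℓ ∧ x = u ++ v ++ w ∧ y = u ++ v ++ v.reverse ++ w

/-- `y` is obtained from `x` by one palindromic deletion of length `ℓ`. -/
def PDel (ℓ : ℕ) (x y : List α) : Prop :=
  ∃ u v w : List α, v.length = ℓ ∧ x = u ++ v ++ v.reverse ++ w ∧ y = u ++ v ++ w

/-- `y` is reached from `x` by exactly `k` steps of the relation `rel`. -/
def reachK (rel : List α → List α → Prop) : ℕ → List α → List α → Prop
  | 0, x, y => x = y
  | k + 1, x, y => ∃ z, rel x z ∧ reachK rel k z y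

/-- The sphere of all words reachable from `x` by at most `t` operations of type `rel`
(in particular it contains `x` itself). -/
def sphere (rel : List α → List α → Prop) (t : ℕ) (x : List α) : Set (List α) :=
  {y | ∃ k ≤ t, reachK rel k x y}

/-- A code `C` is `t`-error correcting for the error type `rel` if distinct codewords have
disjoint spheres. -/
def Correcting (rel : List α → List α → Prop) (t : ℕ) (C : Set (List α)) : Prop :=
  ∀ c₁ ∈ C, ∀ c₂ ∈ C, (sphere rel t c₁ ∩ sphere rel t c₂).Nonempty → c₁ = c₂

/-- The list of maximal runs (maximal blocks of identical consecutive symbols) of a word. -/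
def runs [DecidableEq α] : List α → List (List α)
  | [] => []
  | a :: rest =>
    match runs rest with
    | [] => [[a]]
    | r :: rs => if r.head? = some a then (a :: r) :: rs else [a] :: r :: rs

/-- `r(x)`: the number of runs of `x`. -/
def numRuns [DecidableEq α] (x : List α) : ℕ := (runs x).length

/-- `r_i(x)`: the number of runs of `x` of length exactly `i`. -/
def numRunsEq [DecidableEq α] (x : List α) (i : ℕ) : ℕ :=
  ((runs x).filter (fun r => r.length = i)).length

/-- `r_{≥ i}(x)`: the number of runs of `x` of length at least `i`. -/
def numRunsGe [DecidableEq α] (x : List α) (i : ℕ) : ℕ :=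
  ((runs x).filter (fun r => i ≤ r.length)).length

/-- `r_{I,2}(x)`: the number of runs of length exactly `2` located in the interior of `x`,
i.e. runs that are neither the first nor the last run of `x`. -/
def numInteriorRuns2 [DecidableEq α] (x : List α) : ℕ :=
  ((((runs x).drop 1).dropLast).filter (fun r => r.length = 2)).length

/-- The second component `v` of the `ℓ`-step derivative `φ_ℓ(x) = (u, v)`:
`v = (x_{ℓ+1}, …, x_n) − (x_1, …, x_{n−ℓ})` componentwise in `Z_q`. -/
def derivV (q ℓ : ℕ) (x : List (ZMod q)) : List (ZMod q) :=
  List.zipWith (· - ·) (x.drop ℓ) x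

/-- Hamming weight: the number of nonzero entries. -/
def wtH {q : ℕ} (v : List (ZMod q)) : ℕ := (v.filter (fun a => a ≠ 0)).length

/-- The lengths `(m_0, m_1, …, m_p)` of the (possibly empty) maximal zero runs of `v`,
where `v = (0^{m_0}, w_1, 0^{m_1}, w_2, …, w_p, 0^{m_p})` with all `w_i ≠ 0`. -/
def zeroRunLengths {q : ℕ} : List (ZMod q) → List ℕ
  | [] => [0]
  | a :: rest =>
    let t := zeroRunLengths rest
    if a = 0 then
      match t with
      | [] => [1]
      | m :: ms => (m + 1) :: ms
    else 0 :: t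

/-- The `ℓ`-zero signature `σ_ℓ(v) = (⌊m_0/ℓ⌋, …, ⌊m_p/ℓ⌋)` of `v = derivV q ℓ x`. -/
def sig (q ℓ : ℕ) (x : List (ZMod q)) : List ℕ :=
  (zeroRunLengths (derivV q ℓ x)).map (· / ℓ)

/-- The trunk `μ_ℓ(v)`: every maximal zero run of length `m` is shortened to length
`m mod ℓ`. -/
def trunk (q ℓ : ℕ) (v : List (ZMod q)) : List (ZMod q) :=
  ((runs v).map (fun r =>
    if r.head? = some (0 : ZMod q) then List.replicate (r.length % ℓ) (0 : ZMod q) else r)).flatten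

/-- The root `ρ_ℓ(x) = (u, μ_ℓ(v))` where `φ_ℓ(x) = (u, v)` is the `ℓ`-step derivative. -/
def root (q ℓ : ℕ) (x : List (ZMod q)) : List (ZMod q) × List (ZMod q) :=
  (x.take ℓ, trunk q ℓ (derivV q ℓ x))

/-- `ℓ1`-distance of two lists of naturals. -/
def l1diff (a b : List ℕ) : ℕ := (List.zipWith (fun s t => max s t - min s t) a b).sum

/-- The tandem duplication distance `d_{τ,ℓ}`. -/
def tdDist (q ℓ : ℕ) (x₁ x₂ : List (ZMod q)) : ℕ∞ :=
  if root q ℓ x₁ = root q ℓ x₂ then (l1diff (sig q ℓ x₁) (sig q ℓ x₂) : ℕ∞) else ⊤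

/-- The palindromic duplication `π_{i,ℓ}(x) = (u v v^R w)` at position `i`,
where `x = (u v w)`, `|u| = i`, `|v| = ℓ`. -/
def pdupAt (i ℓ : ℕ) (x : List α) : List α :=
  x.take (i + ℓ) ++ ((x.drop i).take ℓ).reverse ++ x.drop (i + ℓ)

/-- The result `(u v w)` of the palindromic deletion `π^δ_{i,ℓ}` applied to
`x = (u v v^R w)` with `|u| = i`, `|v| = ℓ`. -/
def pdelAt (i ℓ : ℕ) (x : List α) : List α :=
  x.take (i + ℓ) ++ x.drop (i + 2 * ℓ)

/-- The palindromic deletion `π^δ_{i,ℓ}` is defined at position `i` of `x`, i.e. `x` has the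
form `(u v v^R w)` with `|u| = i` and `|v| = ℓ`. -/
def PDelDefinedAt (q ℓ i : ℕ) (x : List (ZMod q)) : Prop :=
  ∃ u v w : List (ZMod q), u.length = i ∧ v.length = ℓ ∧ x = u ++ v ++ v.reverse ++ w

/-- `A(n', ℓ', ω)`: the number of words in `Z_q^{n'}` whose maximal zero runs all have length
at most `ℓ'` and whose Hamming weight is `ω`. -/
noncomputable def Acount (q n' ℓ' ω : ℕ) : ℕ :=
  {x : Fin n' → ZMod q | wtH (List.ofFn x) = ω ∧
    ∀ r ∈ runs (List.ofFn x), r.head? = some (0 : ZMod q) → r.length ≤ ℓ'}.ncard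

/-- Integer binomial coefficient with the conventions `C(a,b) = 0` for `a ≥ 0 > b` or
`0 ≤ a < b`, `C(-1,-1) = 1`, and `C(a,-1) = 0` for `a ≥ 0`. -/
def ichoose (a b : ℤ) : ℕ :=
  if a = -1 ∧ b = -1 then 1
  else if 0 ≤ a ∧ 0 ≤ b then Nat.choose a.toNat b.toNat
  else 0

/-- `r^{(0)}(A^π_ℓ(x))`: the number of maximal blocks of consecutive all-zero columns of the
matrix `A^π_ℓ(x) ∈ Z_q^{ℓ × (n−2ℓ+1)}` whose entry in row `s` and column `c`
(`1 ≤ s ≤ ℓ`, `1 ≤ c ≤ n−2ℓ+1`) is `x_{2ℓ+c−s} − x_{c+s−1}`. -/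
def zeroColBlocks (q ℓ n : ℕ) (x : List (ZMod q)) : ℕ :=
  ((runs ((List.range (n - 2 * ℓ + 1)).map (fun c =>
      (List.range ℓ).all (fun s =>
        x.getD (2 * ℓ + c - s - 1) (0 : ZMod q) = x.getD (c + s) (0 : ZMod q))))).filter
    (fun r => r.head? = some true)).length

/-! ### Palindromic deletions and their counting -/

open Finset

theorem PDel.append_right {ℓ : ℕ} {x y : List α} (h : PDel ℓ x y) (s : List α) :
    PDel ℓ (x ++ s) (y ++ s) := by
  obtain ⟨u, v, w, hv, rfl, rfl⟩ := h
  exact ⟨u, v, w ++ s, hv, by simp, by simp⟩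

theorem PDel.append_left {ℓ : ℕ} {x y : List α} (h : PDel ℓ x y) (s : List α) :
    PDel ℓ (s ++ x) (s ++ y) := by
  obtain ⟨u, v, w, hv, rfl, rfl⟩ := h
  exact ⟨s ++ u, v, w, hv, by simp, by simp⟩

theorem PDel.length_eq {ℓ : ℕ} {x y : List α} (h : PDel ℓ x y) :
    x.length = y.length + ℓ := by
  obtain ⟨u, v, w, hv, rfl, rfl⟩ := h
  simp; omega

theorem PDel.le_length {ℓ : ℕ} {x y : List α} (h : PDel ℓ x y) : ℓ ≤ y.length := by
  obtain ⟨u, v, w, hv, rfl, rfl⟩ := h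
  simp; omega

/-- A deletion result is determined by the position of the deletion. -/
theorem pdelAt_eq {ℓ : ℕ} {u v w : List α} (hv : v.length = ℓ) :
    pdelAt u.length ℓ (u ++ v ++ v.reverse ++ w) = u ++ v ++ w := by
  have h1 : u.length + ℓ = (u ++ v).length := by simp [hv]
  have h2 : u.length + 2 * ℓ = (u ++ v ++ v.reverse).length := by simp [hv]; omega
  unfold pdelAt
  rw [h2, List.drop_left, h1, List.append_assoc (u ++ v), List.take_left]

section Counting

variable [Fintype α]

/-- The finite set of all words of length `n`. -/
noncomputable def words (α : Type*) [Fintype α] (n : ℕ) : Finset (List α) :=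
  (univ : Finset (Fin n → α)).map ⟨List.ofFn, List.ofFn_injective⟩

theorem mem_words {n : ℕ} {x : List α} : x ∈ words α n ↔ x.length = n := by
  constructor
  · intro h
    obtain ⟨f, -, rfl⟩ := Finset.mem_map.1 h
    simp
  · rintro rfl
    exact Finset.mem_map.2 ⟨x.get, mem_univ _, by simp⟩

theorem card_words (n : ℕ) : (words α n).card = Fintype.card α ^ n := by
  simp [words]

theorem sum_words (n : ℕ) (F : List α → ℚ) :
    ∑ f : Fin n → α, F (List.ofFn f) = ∑ x ∈ words α n, F x := by
  simp [words]

open Classical in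
/-- The finite set of words obtained from `x` by exactly one palindromic deletion of
length `ℓ`. -/
noncomputable def dels (ℓ : ℕ) (x : List α) : Finset (List α) :=
  (words α (x.length - ℓ)).filter (PDel ℓ x)

theorem mem_dels {ℓ : ℕ} {x y : List α} : y ∈ dels ℓ x ↔ PDel ℓ x y := by
  simp only [dels, Finset.mem_filter, mem_words, and_iff_right_iff_imp]
  intro h
  have := h.length_eq
  omega

theorem sphere_eq (ℓ : ℕ) (x : List α) :
    sphere (PDel ℓ) 1 x = insert x (dels ℓ x : Set (List α)) := by
  ext y
  simp only [sphere, Set.mem_ofPred_eq, Set.mem_insert_iff, Finset.mem_coe, mem_dels]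
  constructor
  · rintro ⟨k, hk, h⟩
    interval_cases k
    · exact Or.inl h.symm
    · obtain ⟨z, hz, rfl⟩ := h
      exact Or.inr hz
  · rintro (rfl | h)
    · exact ⟨0, by omega, rfl⟩
    · exact ⟨1, le_rfl, y, h, rfl⟩

theorem ncard_sphere {ℓ : ℕ} (hℓ : 1 ≤ ℓ) (x : List α) :
    (sphere (PDel ℓ) 1 x).ncard = (dels ℓ x).card + 1 := by
  rw [sphere_eq, Set.ncard_insert_of_notMem, Set.ncard_coe_finset]
  intro h
  have := (mem_dels.1 (Finset.mem_coe.1 h)).length_eq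
  omega

/-! ### How the number of deletion results changes -/

/-- A deletion of `x` creates at most `2ℓ - 2` additional deletion results: the palindromes of
`y = u v w` that are not visible in `x = u v v^R w` straddle the border between `v` and `w`, and the
one centred exactly at that border still contributes the result `y` itself. -/
theorem card_dels_le_of_pdel {ℓ : ℕ} {x y : List α} (hℓ : 1 ≤ ℓ) (h : PDel ℓ x y) :
    (dels ℓ y).card + 2 ≤ (dels ℓ x).card + 2 * ℓ := by
  classical
  obtain ⟨u, v, w, hv, rfl, rfl⟩ := h
  set P1 : List α → Prop := fun t =>
    ∃ s, s.length = u.length ∧ t = s ++ w ∧ PDel ℓ (u ++ v) s with hP1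
  set P2 : List α → Prop := fun t =>
    ∃ w', t = u ++ v ++ w' ∧
      PDel ℓ (u ++ v ++ v.reverse ++ w) (u ++ v ++ v.reverse ++ w') with hP2
  set G := (dels ℓ (u ++ v ++ w)).filter (fun t => P1 t ∨ P2 t) with hG
  set L := (range (ℓ - 1)).image (fun j => pdelAt (u.length - (1 + j)) ℓ (u ++ v ++ w)) with hL
  set R := (range (ℓ - 1)).image (fun j => pdelAt (u.length + (1 + j)) ℓ (u ++ v ++ w)) with hR
  have hsub : dels ℓ (u ++ v ++ w) ⊆ G ∪ (L ∪ R) := by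
    intro t ht
    obtain ⟨p, r, s, hr, he, rfl⟩ := mem_dels.1 ht
    have hlen := congrArg List.length he
    simp only [List.length_append, List.length_reverse] at hlen
    rw [Finset.mem_union, Finset.mem_union]
    have hat : pdelAt p.length ℓ (u ++ v ++ w) = p ++ r ++ s := by rw [he, pdelAt_eq hr]
    rcases lt_trichotomy p.length u.length with hlt | heq | hgt
    · by_cases hc : p.length + ℓ ≤ u.length
      · left
        refine Finset.mem_filter.2 ⟨ht, Or.inl ?_⟩
        -- the palindrome lies inside `u ++ v`
        have hpre : p ++ r ++ r.reverse <+: u ++ v := by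
          refine List.prefix_of_prefix_length_le (l₃ := u ++ v ++ w) ?_ ⟨w, rfl⟩ ?_
          · exact ⟨s, he.symm⟩
          · simp; omega
        obtain ⟨s', hs'⟩ := hpre
        have hs : s = s' ++ w := by
          rw [← hs', List.append_assoc] at he
          exact (List.append_cancel_left he).symm
        have hl' := congrArg List.length hs'
        simp only [List.length_append, List.length_reverse] at hl'
        exact ⟨p ++ r ++ s', by simp; omega, by simp [hs], p, r, s', hr, hs'.symm, rfl⟩
      · right; left
        refine Finset.mem_image.2 ⟨u.length - p.length - 1, Finset.mem_range.2 (by omega), ?_⟩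
        rw [← hat]
        congr 1
        omega
    · left
      refine Finset.mem_filter.2 ⟨ht, Or.inr ?_⟩
      simp only [List.append_assoc] at he
      obtain ⟨rfl, he'⟩ := List.append_inj he heq.symm
      obtain ⟨rfl, rfl⟩ := List.append_inj he' (by omega)
      exact ⟨s, rfl, u, v, v.reverse ++ s, hv, by simp, by simp⟩
    · by_cases hc : u.length + ℓ ≤ p.length
      · left
        refine Finset.mem_filter.2 ⟨ht, Or.inr ?_⟩
        have hpre : u ++ v <+: p := by
          refine List.prefix_of_prefix_length_le (l₃ := u ++ v ++ w) ⟨w, rfl⟩ ?_ ?_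
          · exact ⟨r ++ r.reverse ++ s, by rw [he]; simp⟩
          · simp; omega
        obtain ⟨p', rfl⟩ := hpre
        have hw : w = p' ++ r ++ r.reverse ++ s := by
          have : u ++ v ++ w = u ++ v ++ (p' ++ r ++ r.reverse ++ s) := by rw [he]; simp
          exact List.append_cancel_left this
        exact ⟨p' ++ r ++ s, by simp,
          PDel.append_left ⟨p', r, s, hr, hw, rfl⟩ _⟩
      · right; right
        refine Finset.mem_image.2 ⟨p.length - u.length - 1, Finset.mem_range.2 (by omega), ?_⟩
        rw [← hat]
        congr 1
        omega
  -- Reinserting `v^R` is injective on the surviving results.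
  have hGcard : G.card ≤ (dels ℓ (u ++ v ++ v.reverse ++ w)).card := by
    have hA : ∀ t, P1 t → ∃ s, s.length = u.length ∧ t = s ++ w ∧
        PDel ℓ (u ++ v) s ∧ t.take u.length = s ∧ t.drop u.length = w := by
      rintro t ⟨s, hs, rfl, hd⟩
      exact ⟨s, hs, rfl, hd, by rw [← hs, List.take_left], by rw [← hs, List.drop_left]⟩
    have hB : ∀ t, P2 t → ∃ w', t = u ++ v ++ w' ∧
        PDel ℓ (u ++ v ++ v.reverse ++ w) (u ++ v ++ v.reverse ++ w') ∧
        t.drop (u ++ v).length = w' := by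
      rintro t ⟨w', rfl, hd⟩
      exact ⟨w', rfl, hd, by rw [List.drop_left]⟩
    -- A coincidence between the two kinds of images forces `s = u` and `v = v^R`.
    have hcross : ∀ s w', s.length = u.length →
        s ++ v.reverse ++ w = u ++ v ++ v.reverse ++ w' → s ++ w = u ++ v ++ w' := by
      intro s w' hs he
      simp only [List.append_assoc] at he
      obtain ⟨hsu, he'⟩ := List.append_inj he hs
      obtain ⟨hvv, hw⟩ := List.append_inj he' (by simp)
      rw [hsu, hw, hvv, List.append_assoc]
    refine Finset.card_le_card_of_injOn
      (fun t => if P1 t then t.take u.length ++ v.reverse ++ w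
        else u ++ v ++ v.reverse ++ t.drop (u ++ v).length) ?_ ?_
    · intro t ht
      have ht' := (Finset.mem_filter.1 (Finset.mem_coe.1 ht)).2
      rw [Finset.mem_coe, mem_dels]
      by_cases h1 : P1 t
      · obtain ⟨s, -, -, hd, h2, -⟩ := hA t h1
        simp only [h1, if_true, h2]
        exact (hd.append_right v.reverse).append_right w
      · obtain ⟨w', -, hd, h2⟩ := hB t (ht'.resolve_left h1)
        simp only [h1, if_false, h2]
        exact hd
    · intro t ht t' ht' he
      have ht := (Finset.mem_filter.1 (Finset.mem_coe.1 ht)).2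
      have ht' := (Finset.mem_filter.1 (Finset.mem_coe.1 ht')).2
      by_cases h1 : P1 t <;> by_cases h1' : P1 t'
      · obtain ⟨s, -, e, -, h2, -⟩ := hA t h1
        obtain ⟨s', -, e', -, h2', -⟩ := hA t' h1'
        simp only [h1, h1', if_true, h2, h2'] at he
        rw [e, e', List.append_cancel_right (List.append_cancel_right he)]
      · obtain ⟨s, hs, e, -, h2, -⟩ := hA t h1
        obtain ⟨w', e', -, h2'⟩ := hB t' (ht'.resolve_left h1')
        simp only [h1, h1', if_true, if_false, h2, h2'] at he
        rw [e, e', hcross s w' hs he]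
      · obtain ⟨w', e, -, h2⟩ := hB t (ht.resolve_left h1)
        obtain ⟨s, hs, e', -, h2', -⟩ := hA t' h1'
        simp only [h1, h1', if_true, if_false, h2, h2'] at he
        rw [e, e', hcross s w' hs he.symm]
      · obtain ⟨w', e, -, h2⟩ := hB t (ht.resolve_left h1)
        obtain ⟨w'', e', -, h2'⟩ := hB t' (ht'.resolve_left h1')
        simp only [h1, h1', if_false, h2, h2'] at he
        rw [e, e', List.append_cancel_left he]
  have h1 := Finset.card_le_card hsub
  have h2 := Finset.card_union_le G (L ∪ R)
  have h3 := Finset.card_union_le L R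
  have h4 : L.card ≤ ℓ - 1 := Finset.card_image_le.trans (by simp)
  have h5 : R.card ≤ ℓ - 1 := Finset.card_image_le.trans (by simp)
  omega

/-- Appending a word `z` of length `ℓ` creates at most one new deletion result for each of the `ℓ`
positions `|y| + 1 + j - 2ℓ` at which a palindrome of length `2ℓ` would meet `z`. If no palindrome
occurs at the positions with `j ≥ m`, at most `m` results are new. -/
theorem card_dels_append_le {ℓ : ℕ} {y z : List α} (hz : z.length = ℓ) (m : ℕ)
    (hm : ∀ j < ℓ, m ≤ j → ∀ u v w : List α, v.length = ℓ →
      y ++ z = u ++ v ++ v.reverse ++ w → u.length + 2 * ℓ ≠ y.length + 1 + j) :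
    (dels ℓ (y ++ z)).card ≤ (dels ℓ y).card + m := by
  classical
  have hsub : dels ℓ (y ++ z) ⊆ (dels ℓ y).image (· ++ z) ∪
      (range m).image (fun j => pdelAt (y.length + 1 + j - 2 * ℓ) ℓ (y ++ z)) := by
    intro t ht
    obtain ⟨p, r, s, hr, he, rfl⟩ := mem_dels.1 ht
    have hlen := congrArg List.length he
    simp only [List.length_append, List.length_reverse] at hlen
    rw [Finset.mem_union]
    by_cases hc : p.length + 2 * ℓ ≤ y.length
    · left
      have hpre : p ++ r ++ r.reverse <+: y := by
        refine List.prefix_of_prefix_length_le (l₃ := y ++ z) ⟨s, he.symm⟩ ⟨z, rfl⟩ ?_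
        simp; omega
      obtain ⟨s', rfl⟩ := hpre
      rw [List.append_assoc] at he
      refine Finset.mem_image.2 ⟨p ++ r ++ s', mem_dels.2 ⟨p, r, s', hr, rfl, rfl⟩, ?_⟩
      rw [← List.append_cancel_left he, List.append_assoc]
    · right
      refine Finset.mem_image.2 ⟨p.length + 2 * ℓ - y.length - 1, Finset.mem_range.2 ?_, ?_⟩
      · by_contra hcon
        exact hm (p.length + 2 * ℓ - y.length - 1) (by omega) (by omega) p r s hr he (by omega)
      · have hat : pdelAt p.length ℓ (y ++ z) = p ++ r ++ s := by rw [he, pdelAt_eq hr]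
        rw [← hat]
        congr 1
        omega
  calc (dels ℓ (y ++ z)).card ≤ _ := Finset.card_le_card hsub
    _ ≤ _ := Finset.card_union_le _ _
    _ ≤ (dels ℓ y).card + m :=
      Nat.add_le_add Finset.card_image_le (Finset.card_image_le.trans (by simp))

/-- The last position `|y| - ℓ` carries a palindrome only if `z` is the reversal of the last `ℓ`
symbols of `y`; any other `z` creates at most `ℓ - 1` new results. -/
theorem card_dels_append_le_of_ne {ℓ : ℕ} {y z : List α} (hℓ : 1 ≤ ℓ) (hz : z.length = ℓ)
    (hne : z ≠ (y.drop (y.length - ℓ)).reverse) :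
    (dels ℓ (y ++ z)).card + 1 ≤ (dels ℓ y).card + ℓ := by
  have := card_dels_append_le (y := y) hz (ℓ - 1) ?_
  · omega
  · intro j hj hmj u v w hv he hlen
    have hl := congrArg List.length he
    simp only [List.length_append, List.length_reverse] at hl
    rw [List.append_assoc (u ++ v)] at he
    obtain ⟨rfl, rfl⟩ := List.append_inj he (by simp; omega)
    apply hne
    have hw : w = [] := List.length_eq_zero_iff.1 (by simp at hz; omega)
    have : (u ++ v).length - ℓ = u.length := by simp [hv]
    rw [this, List.drop_left, hw, List.append_nil]

/-- The words `y z`, with `z` ranging over all words of length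
`ℓ`, carry a large total weight. -/
theorem sum_extensions {ℓ : ℕ} {y : List α} (hℓ : 1 ≤ ℓ) (hy : ℓ ≤ y.length) :
    ((Fintype.card α : ℚ) ^ ℓ - 1) / ((dels ℓ y).card + ℓ) + 1 / ((dels ℓ y).card + ℓ + 1) ≤
      ∑ z ∈ words α ℓ, 1 / ((dels ℓ (y ++ z)).card + 1 : ℚ) := by
  classical
  set z₀ := (y.drop (y.length - ℓ)).reverse with hz₀
  have hmem : z₀ ∈ words α ℓ := by rw [mem_words]; simp [hz₀]; omega
  rw [← Finset.add_sum_erase _ _ hmem, add_comm]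
  refine add_le_add ?_ ?_
  · have := card_dels_append_le (y := y) (mem_words.1 hmem) ℓ (fun j h1 h2 => by omega)
    have h' : ((dels ℓ (y ++ z₀)).card : ℚ) ≤ (dels ℓ y).card + ℓ := by exact_mod_cast this
    exact one_div_le_one_div_of_le (by positivity) (by linarith)
  · have hc : (((words α ℓ).erase z₀).card : ℚ) = (Fintype.card α : ℚ) ^ ℓ - 1 := by
      rw [Finset.card_erase_of_mem hmem, Nat.cast_sub (Finset.card_pos.2 ⟨_, hmem⟩), card_words]
      simp
    have := Finset.card_nsmul_le_sum ((words α ℓ).erase z₀)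
      (fun z => 1 / ((dels ℓ (y ++ z)).card + 1 : ℚ)) (1 / ((dels ℓ y).card + ℓ)) ?_
    · rw [nsmul_eq_mul, hc, mul_one_div] at this
      exact this
    · intro z hz
      have hz' := Finset.mem_erase.1 hz
      have := card_dels_append_le_of_ne hℓ (mem_words.1 hz'.2) hz'.1
      have h' : ((dels ℓ (y ++ z)).card : ℚ) + 1 ≤ (dels ℓ y).card + ℓ := by exact_mod_cast this
      exact one_div_le_one_div_of_le (by positivity) (by linarith)

end Counting

/-! ### The numerical inequality -/

theorem three_mul_le_two_pow {ℓ : ℕ} (h : 4 ≤ ℓ) : 3 * ℓ ≤ 2 ^ ℓ := by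
  induction ℓ, h using Nat.le_induction with
  | base => norm_num
  | succ n hn ih => rw [pow_succ]; omega

/-- The numerical heart, for `k = |D(y)|`, `m = |D(x)|` and `Q = q ^ ℓ`. The denominators grow at
most linearly in `m`, so everything reduces to `m = 1`, `k = 2ℓ - 1`, where
`ℓ ≤ 3` is direct computation and `ℓ ≥ 4` follows from `3ℓ ≤ 2^ℓ`. -/
theorem weight_ineq {ℓ k m : ℕ} {Q : ℚ} (hℓ : 1 ≤ ℓ) (hm : 1 ≤ m)
    (hk : k + 2 ≤ m + 2 * ℓ) (hQ : (2 : ℚ) ^ ℓ ≤ Q) :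
    (1 : ℚ) / m ≤ 1 / (k + 1) + ((Q - 1) / (k + ℓ) + 1 / (k + ℓ + 1)) := by
  have hℓ' : (1 : ℚ) ≤ ℓ := by exact_mod_cast hℓ
  have hm' : (1 : ℚ) ≤ m := by exact_mod_cast hm
  have hk' : (k : ℚ) + 2 ≤ m + 2 * ℓ := by exact_mod_cast hk
  have hk0 : (0 : ℚ) ≤ k := by positivity
  have hp : (0 : ℚ) ≤ (m - 1) * (ℓ - 1) := mul_nonneg (by linarith) (by linarith)
  have hQ1 : (0 : ℚ) ≤ Q - 1 := by
    have : (1 : ℚ) ≤ 2 ^ ℓ := one_le_pow₀ (by norm_num)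
    linarith
  have h1 : (1 : ℚ) / (m * (2 * ℓ)) ≤ 1 / (k + 1) :=
    one_div_le_one_div_of_le (by positivity) (by nlinarith)
  have h2 : (Q - 1) / (m * (3 * ℓ - 1)) ≤ (Q - 1) / (k + ℓ) :=
    div_le_div_of_nonneg_left hQ1 (by positivity) (by nlinarith)
  have h3 : (1 : ℚ) / (m * (3 * ℓ)) ≤ 1 / (k + ℓ + 1) :=
    one_div_le_one_div_of_le (by positivity) (by nlinarith)
  have key : (1 : ℚ) ≤ 1 / (2 * ℓ) + (Q - 1) / (3 * ℓ - 1) + 1 / (3 * ℓ) := by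
    have h4 : ((2 : ℚ) ^ ℓ - 1) / (3 * ℓ - 1) ≤ (Q - 1) / (3 * ℓ - 1) :=
      div_le_div_of_nonneg_right (by linarith) (by linarith)
    refine le_trans ?_ (add_le_add_left (add_le_add_right h4 _) _)
    by_cases h : 4 ≤ ℓ
    · have h5 : (3 * ℓ : ℚ) ≤ 2 ^ ℓ := by exact_mod_cast three_mul_le_two_pow h
      have h6 : (1 : ℚ) ≤ (2 ^ ℓ - 1) / (3 * ℓ - 1) := by
        rw [one_le_div (by linarith)]; linarith
      have h7 : (0 : ℚ) ≤ 1 / (2 * ℓ) := by positivity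
      have h8 : (0 : ℚ) ≤ 1 / (3 * ℓ) := by positivity
      linarith
    · have : ℓ = 1 ∨ ℓ = 2 ∨ ℓ = 3 := by omega
      rcases this with rfl | rfl | rfl <;> norm_num
  calc (1 : ℚ) / m = 1 / m * 1 := by ring
    _ ≤ 1 / m * (1 / (2 * ℓ) + (Q - 1) / (3 * ℓ - 1) + 1 / (3 * ℓ)) :=
      mul_le_mul_of_nonneg_left key (by positivity)
    _ = 1 / (m * (2 * ℓ)) + ((Q - 1) / (m * (3 * ℓ - 1)) + 1 / (m * (3 * ℓ))) := by
      simp only [div_eq_mul_inv, mul_inv]; ring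
    _ ≤ _ := by linarith

/-! ### Charging the codewords -/

section Bound

variable [Fintype α]

open Classical in
/-- The charge available to a word `y` of length `n - ℓ`: its own weight, together with the weights
of all its extensions by `ℓ` symbols if some deletion is defined on `y`. -/
noncomputable def charge (ℓ : ℕ) (y : List α) : ℚ :=
  1 / ((dels ℓ y).card + 1 : ℚ) +
    if (dels ℓ y).card = 0 then 0 else ∑ z ∈ words α ℓ, 1 / ((dels ℓ (y ++ z)).card + 1 : ℚ)

/-- Each deletion result `y` of `c` can pay the share `1 / |D(c)|` of the codeword `c`. -/
theorem one_div_le_charge {ℓ : ℕ} (hα : 2 ≤ Fintype.card α) (hℓ : 1 ≤ ℓ) {c y : List α}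
    (h : PDel ℓ c y) : 1 / ((dels ℓ c).card : ℚ) ≤ charge ℓ y := by
  have hpos : 1 ≤ (dels ℓ c).card := Finset.card_pos.2 ⟨y, mem_dels.2 h⟩
  unfold charge
  split_ifs with h0
  · rw [h0]
    have : (1 : ℚ) ≤ (dels ℓ c).card := by exact_mod_cast hpos
    simpa using inv_le_one_of_one_le₀ this
  · refine (weight_ineq hℓ hpos (card_dels_le_of_pdel hℓ h) ?_).trans
      (add_le_add_right (sum_extensions hℓ h.le_length) _)
    have : (2 : ℚ) ≤ Fintype.card α := by exact_mod_cast hα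
    exact pow_le_pow_left₀ (by norm_num) this ℓ

theorem charge_nonneg (ℓ : ℕ) (y : List α) : 0 ≤ charge ℓ y := by
  unfold charge
  split_ifs <;> positivity

/-- The extension weights of distinct reducible words `y` are weights of distinct reducible words
of length `n`. -/
theorem sum_charge_le (ℓ n : ℕ) :
    ∑ y ∈ words α n, charge ℓ y ≤
      (∑ x ∈ (words α (n + ℓ)).filter (fun x => (dels ℓ x).card ≠ 0),
        1 / ((dels ℓ x).card + 1 : ℚ)) +
      ∑ y ∈ words α n, 1 / ((dels ℓ y).card + 1 : ℚ) := by
  classical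
  unfold charge
  rw [Finset.sum_add_distrib, add_comm]
  refine add_le_add_left ?_ _
  have : ∀ y ∈ words α n, (if (dels ℓ y).card = 0 then (0 : ℚ) else
      ∑ z ∈ words α ℓ, 1 / ((dels ℓ (y ++ z)).card + 1 : ℚ)) =
      if (dels ℓ y).card ≠ 0 then
        ∑ z ∈ words α ℓ, 1 / ((dels ℓ (y ++ z)).card + 1 : ℚ) else 0 := by
    intro y _
    split_ifs <;> simp_all
  rw [Finset.sum_congr rfl this, ← Finset.sum_filter, ← Finset.sum_product']
  have hinj : Set.InjOn (fun p : List α × List α => p.1 ++ p.2)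
      (((words α n).filter (fun y => (dels ℓ y).card ≠ 0)) ×ˢ words α ℓ : Finset _) := by
    rintro ⟨a, b⟩ hab ⟨a', b'⟩ hab' he
    simp only [Finset.coe_product, Set.mem_prod, Finset.mem_coe, Finset.mem_filter,
      mem_words] at hab hab'
    obtain ⟨rfl, rfl⟩ := List.append_inj he (hab.1.1.trans hab'.1.1.symm)
    rfl
  rw [← Finset.sum_image (f := fun x => 1 / ((dels ℓ x).card + 1 : ℚ)) hinj]
  refine Finset.sum_le_sum_of_subset_of_nonneg ?_ (fun _ _ _ => by positivity)
  intro x hx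
  obtain ⟨⟨y, z⟩, hyz, rfl⟩ := Finset.mem_image.1 hx
  simp only [Finset.mem_product, Finset.mem_filter, mem_words] at hyz
  obtain ⟨⟨hy, hd⟩, hz⟩ := hyz
  refine Finset.mem_filter.2 ⟨by simp [mem_words, hy, hz], ?_⟩
  obtain ⟨t, ht⟩ := Finset.card_pos.1 (Nat.pos_of_ne_zero hd)
  exact (Finset.card_pos.2 ⟨t ++ z, mem_dels.2 ((mem_dels.1 ht).append_right z)⟩).ne'

theorem card_code_le {ℓ n : ℕ} (hα : 2 ≤ Fintype.card α) (hℓ : 1 ≤ ℓ)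
    (C : Finset (List α)) (hC : ∀ c ∈ C, c.length = n + ℓ)
    (hcorr : Correcting (PDel ℓ) 1 (C : Set (List α))) :
    (C.card : ℚ) ≤ (∑ x ∈ words α (n + ℓ), 1 / ((dels ℓ x).card + 1 : ℚ)) +
      ∑ y ∈ words α n, 1 / ((dels ℓ y).card + 1 : ℚ) := by
  classical
  have hsplit := Finset.card_filter_add_card_filter_not (s := C) (fun c => (dels ℓ c).card ≠ 0)
  have hred : ((C.filter (fun c => (dels ℓ c).card ≠ 0)).card : ℚ) ≤
      ∑ y ∈ words α n, charge ℓ y := by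
    set B := C.filter (fun c => (dels ℓ c).card ≠ 0) with hB
    have hdisj : (B : Set (List α)).PairwiseDisjoint (dels ℓ) := by
      intro c hc c' hc' hne
      rw [Function.onFun, Finset.disjoint_left]
      intro y hy hy'
      refine hne (hcorr c (Finset.mem_filter.1 hc).1 c' (Finset.mem_filter.1 hc').1 ⟨y, ?_, ?_⟩)
      · rw [sphere_eq]; exact Or.inr hy
      · rw [sphere_eq]; exact Or.inr hy'
    calc (B.card : ℚ) = ∑ c ∈ B, ∑ y ∈ dels ℓ c, 1 / ((dels ℓ c).card : ℚ) := by
          rw [Finset.card_eq_sum_ones, Nat.cast_sum]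
          refine Finset.sum_congr rfl fun c hc => ?_
          have : ((dels ℓ c).card : ℚ) ≠ 0 := by
            exact_mod_cast (Finset.mem_filter.1 hc).2
          rw [Finset.sum_const, nsmul_eq_mul, mul_one_div, div_self this, Nat.cast_one]
      _ ≤ ∑ c ∈ B, ∑ y ∈ dels ℓ c, charge ℓ y :=
          Finset.sum_le_sum fun c _ => Finset.sum_le_sum fun y hy =>
            one_div_le_charge hα hℓ (mem_dels.1 hy)
      _ = ∑ y ∈ B.biUnion (dels ℓ), charge ℓ y := (Finset.sum_biUnion hdisj).symm
      _ ≤ ∑ y ∈ words α n, charge ℓ y := by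
          refine Finset.sum_le_sum_of_subset_of_nonneg ?_ (fun _ _ _ => charge_nonneg _ _)
          intro y hy
          obtain ⟨c, hc, hyc⟩ := Finset.mem_biUnion.1 hy
          have h1 := (mem_dels.1 hyc).length_eq
          have h2 := hC c (Finset.mem_filter.1 hc).1
          exact mem_words.2 (by omega)
  have hirr : ((C.filter (fun c => ¬ (dels ℓ c).card ≠ 0)).card : ℚ) ≤
      ∑ x ∈ (words α (n + ℓ)).filter (fun x => ¬ (dels ℓ x).card ≠ 0),
        1 / ((dels ℓ x).card + 1 : ℚ) := by
    have h1 : ∑ x ∈ (words α (n + ℓ)).filter (fun x => ¬ (dels ℓ x).card ≠ 0),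
        1 / ((dels ℓ x).card + 1 : ℚ) =
        ((words α (n + ℓ)).filter (fun x => ¬ (dels ℓ x).card ≠ 0)).card := by
      rw [Finset.card_eq_sum_ones, Nat.cast_sum]
      refine Finset.sum_congr rfl fun x hx => ?_
      rw [not_not.1 (Finset.mem_filter.1 hx).2]
      norm_num
    rw [h1]
    exact_mod_cast Finset.card_le_card
      (Finset.filter_subset_filter _ fun c hc => mem_words.2 (hC c hc))
  have hsum := Finset.sum_filter_add_sum_filter_not (words α (n + ℓ))
    (fun x => (dels ℓ x).card ≠ 0) (fun x => 1 / ((dels ℓ x).card + 1 : ℚ))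
  have := sum_charge_le (α := α) ℓ n
  have hcast : (C.card : ℚ) = (C.filter (fun c => (dels ℓ c).card ≠ 0)).card +
      (C.filter (fun c => ¬ (dels ℓ c).card ≠ 0)).card := by exact_mod_cast hsplit.symm
  linarith

end Bound

/-- Generalized sphere packing bound for single palindromic-deletion correcting codes:
`|C| ≤ Σ_{x ∈ Z_q^n} 1/|S_{π^δ,ℓ}(x)| + Σ_{x' ∈ Z_q^{n−ℓ}} 1/|S_{π^δ,ℓ}(x')|`. -/
theorem stmt14 (q ℓ n : ℕ) (hq : 2 ≤ q) (hℓ : 1 ≤ ℓ) (hn : 2 * ℓ ≤ n)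
    (C : Finset (List (ZMod q))) (hC : ∀ c ∈ C, c.length = n)
    (hcorr : Correcting (PDel ℓ) 1 (↑C : Set (List (ZMod q)))) :
    haveI : NeZero q := ⟨by omega⟩
    (C.card : ℚ) ≤
      (∑ x : Fin n → ZMod q, 1 / ((sphere (PDel ℓ) 1 (List.ofFn x)).ncard : ℚ)) +
        ∑ x : Fin (n - ℓ) → ZMod q, 1 / ((sphere (PDel ℓ) 1 (List.ofFn x)).ncard : ℚ) := by
  have : NeZero q := ⟨by omega⟩
  obtain ⟨k, rfl⟩ : ∃ k, n = k + ℓ := ⟨n - ℓ, by omega⟩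
  have hk : k + ℓ - ℓ = k := by omega
  simp only [ncard_sphere hℓ, Nat.cast_add, Nat.cast_one]
  rw [hk, sum_words (k + ℓ) (fun x => 1 / ((dels ℓ x).card + 1 : ℚ)),
    sum_words k (fun x => 1 / ((dels ℓ x).card + 1 : ℚ))]
  exact card_code_le (by rw [ZMod.card]; exact hq) hℓ C hC hcorr

end DupPaper
end

section
/- Let q ≥ 2, ℓ ≥ 1, x ∈ Z_q^n (indexed x_1, …, x_n), and let i ≥ 0 and j ≥ ℓ satisfy i + j ≤ n − ℓ. Then π_{i,ℓ}(x) = π_{i+j,ℓ}(x) if and only if all of the following hold: x_{i+ℓ+1+m} = x_{i+ℓ−m} for all m ∈ {0, …, ℓ−1}; x_{i+ℓ+1+m} = x_{i+1+m} for all m ∈ {ℓ, …, j−1}; and x_{i+ℓ+2j−m} = x_{i+1+m} for all m ∈ {j, …, ℓ+j−1}. -/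
/-!
Both words have length `n + ℓ`, so they are equal iff they agree letter by letter. Outside the
window of 0-based positions `k = i + ℓ + m` with `0 ≤ m < ℓ + j` they agree automatically.
Inside it, since `ℓ ≤ j`, exactly three cases occur: `m < ℓ` (reversed block of the first word
against the prefix of the second), `ℓ ≤ m < j` (shifted tail against prefix) and `j ≤ m < ℓ + j`
(shifted tail against reversed block), and these give the three families of equations.
The letters of a palindromic duplication are computed in `pdupAt_getD`.
-/

namespace DupPaper

variable {α : Type*}

/-- The letters of `π_{i,ℓ}(x)`, 0-based: the prefix `uv`, then `v` read backwards, then the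
remainder of `x` shifted by `ℓ`. -/
theorem pdupAt_getD {q : ℕ} (i ℓ : ℕ) (x : List (ZMod q)) (h : i + ℓ ≤ x.length) (k : ℕ) :
    (pdupAt i ℓ x).getD k 0 =
      if k < i + ℓ then x.getD k 0
      else if k < i + 2 * ℓ then x.getD (2 * i + 2 * ℓ - 1 - k) 0
      else x.getD (k - ℓ) 0 := by
  simp only [pdupAt, List.getD_eq_getElem?_getD]
  split_ifs with h1 h2
  · rw [List.append_assoc, List.getElem?_append_left (by simp; omega), List.getElem?_take, if_pos h1]
  · rw [List.getElem?_append_left (by simp; omega), List.getElem?_append_right (by simp; omega),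
      List.getElem?_reverse (by simp; omega), List.getElem?_take, if_pos (by simp; omega),
      List.getElem?_drop]
    congr 2
    simp only [List.length_take, List.length_drop]
    omega
  · rw [List.getElem?_append_right (by simp; omega), List.getElem?_drop]
    congr 2
    simp only [List.length_append, List.length_reverse, List.length_take, List.length_drop]
    omega

theorem pdupAt_length {q : ℕ} (i ℓ : ℕ) (x : List (ZMod q)) (h : i + ℓ ≤ x.length) :
    (pdupAt i ℓ x).length = x.length + ℓ := by
  simp [pdupAt]
  omega

theorem pdupAt_eq_iff {q : ℕ} (i i' ℓ : ℕ) (x : List (ZMod q)) (h : i + ℓ ≤ x.length)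
    (h' : i' + ℓ ≤ x.length) :
    pdupAt i ℓ x = pdupAt i' ℓ x ↔
      ∀ k, (pdupAt i ℓ x).getD k 0 = (pdupAt i' ℓ x).getD k 0 := by
  refine ⟨fun e k => by rw [e], fun H => ?_⟩
  refine List.ext_getElem (by rw [pdupAt_length _ _ _ h, pdupAt_length _ _ _ h']) fun k h1 h2 => ?_
  have := H k
  rwa [List.getD_eq_getElem _ _ h1, List.getD_eq_getElem _ _ h2] at this

/-- Conditions for two palindromic duplications at positions `i` and `i+j`, `j ≥ ℓ`,
to yield the same word (indices are 1-based: `x_k` is `x.getD (k-1) 0`). -/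
theorem stmt18 (q ℓ n : ℕ) (hq : 2 ≤ q) (hℓ : 1 ≤ ℓ) (x : List (ZMod q)) (hx : x.length = n)
    (i j : ℕ) (hjℓ : ℓ ≤ j) (hij : i + j + ℓ ≤ n) :
    pdupAt i ℓ x = pdupAt (i + j) ℓ x ↔
      ((∀ m < ℓ, x.getD (i + ℓ + m) 0 = x.getD (i + ℓ - m - 1) 0) ∧
       (∀ m, ℓ ≤ m → m < j → x.getD (i + ℓ + m) 0 = x.getD (i + m) 0) ∧
       (∀ m, j ≤ m → m < ℓ + j →
          x.getD (i + ℓ + 2 * j - m - 1) 0 = x.getD (i + m) 0)) := by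
  subst hx
  rw [pdupAt_eq_iff _ _ _ _ (by omega) hij]
  simp only [pdupAt_getD i ℓ x (by omega), pdupAt_getD (i + j) ℓ x hij]
  constructor
  · intro H
    refine ⟨fun m hm => ?_, fun m h1 h2 => ?_, fun m h1 h2 => ?_⟩
    · have := H (i + ℓ + m)
      rw [if_neg (by omega), if_pos (by omega), if_pos (by omega)] at this
      rw [← this]
      congr 1
      omega
    · have := H (i + ℓ + m)
      rw [if_neg (by omega), if_neg (by omega), if_pos (by omega)] at this
      rw [← this]
      congr 1
      omega
    · have := H (i + ℓ + m)
      rw [if_neg (by omega), if_neg (by omega), if_neg (by omega), if_pos (by omega)] at this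
      convert this.symm using 2 <;> omega
  · rintro ⟨H1, H2, H3⟩ k
    by_cases hk : k < i + ℓ
    · rw [if_pos hk, if_pos (by omega)]
    obtain ⟨m, rfl⟩ := Nat.exists_eq_add_of_le (not_lt.mp hk)
    rw [if_neg hk]
    by_cases h1 : m < ℓ
    · rw [if_pos (by omega), if_pos (by omega), H1 m h1]
      congr 1
      omega
    rw [if_neg (by omega)]
    by_cases h2 : m < j
    · rw [if_pos (by omega), H2 m (by omega) h2]
      congr 1
      omega
    rw [if_neg (by omega)]
    by_cases h3 : m < ℓ + j
    · rw [if_pos (by omega)]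
      convert (H3 m (by omega) h3).symm using 2 <;> omega
    · rw [if_neg (by omega)]
end DupPaper
end
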